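/- Let N be a positive integer, let 𝕋_N := ℝ/(2πN·ℤ) with Lebesgue measure, and let K : 𝕋_N × 𝕋_N → [0, ∞) be continuous with K(β + π, α + π) = K(β, α) for all β, α ∈ 𝕋_N. Let T be the integral operator on L²(𝕋_N) with kernel K, i.e., (T F)(β) = ∫_{𝕋_N} K(β, α)·F(α) dα, and let L₀ be the integral operator on L²((0, π)) with kernel L₀(β, α) = Σ_{n=0}^{2N−1} K(β, α + nπ). Then T and L₀ are bounded, and their operator norms coincide: ‖T‖_{L²(𝕋_N) → L²(𝕋_N)} = ‖L₀‖_{L²(0,π) → L²(0,π)}. -/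

import Mathlib

/-!
The translates `(0, p) + n p`, `n < M`, tile the circle of circumference `M p`, so a function on the
circle is a vector of `M` functions on `(0, p)`, and `T` becomes integration against a matrix of
kernels. Since `K` is invariant under the diagonal translation by `p`, every row and every column of
this matrix has the same sum, namely the kernel of `L₀`. A function whose values on all tiles agree
is mapped by `T` to the function whose values on all tiles are given by `L₀`, whence `‖L₀‖ ≤ ‖T‖`.
Conversely, by Schur's test a nonnegative matrix with row and column sums `l` has `ℓ²` operator norm
at most `l`, so the `ℓ²` norm over the tiles of `T F` is bounded pointwise by `L₀` applied to that
of `F`, whence `‖T‖ ≤ ‖L₀‖`.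
-/

open MeasureTheory

section IntegralOperator

variable {X : Type*} [MeasurableSpace X] {ν : Measure X}

/-- `T` is the integral operator on `L²(ν)` with kernel `k`. Integrability of the integrand is part
of the notion, since the Bochner integral of a non-integrable function is `0` by convention. -/
def IsIntegralOperator (ν : Measure X) (k : X → X → ℝ) (T : Lp ℝ 2 ν →L[ℝ] Lp ℝ 2 ν) : Prop :=
  ∀ F : Lp ℝ 2 ν, ∀ᵐ x ∂ν, Integrable (fun y ↦ k x y * F y) ν ∧ T F x = ∫ y, k x y * F y ∂ν

lemma integral_mul_eq_inner {f : X → ℝ} (hf : MemLp f 2 ν) (F : Lp ℝ 2 ν) :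
    ∫ y, f y * F y ∂ν = inner ℝ (hf.toLp f) F := by
  rw [L2.inner_def]
  refine integral_congr_ae ?_
  filter_upwards [hf.coeFn_toLp] with y hy
  simp only [hy, Real.inner_apply]

lemma norm_sq_eq_integral_sq (F : Lp ℝ 2 ν) : ‖F‖ ^ 2 = ∫ x, F x ^ 2 ∂ν := by
  rw [← real_inner_self_eq_norm_sq, L2.inner_def]
  simp only [real_inner_self_eq_norm_sq, Real.norm_eq_abs, sq_abs]

variable [IsFiniteMeasure ν]

lemma norm_integral_mul_le {f : X → ℝ} (hf : AEStronglyMeasurable f ν) {C : ℝ} (hC0 : 0 ≤ C)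
    (hC : ∀ x, ‖f x‖ ≤ C) (F : Lp ℝ 2 ν) :
    ‖∫ y, f y * F y ∂ν‖ ≤ ν.real Set.univ ^ (2 : ENNReal).toReal⁻¹ * C * ‖F‖ := by
  have hf2 : MemLp f 2 ν := .of_bound hf C (.of_forall hC)
  rw [integral_mul_eq_inner hf2]
  refine (norm_inner_le_norm _ _).trans ?_
  gcongr
  refine Lp.norm_le_of_ae_bound hC0 ?_
  filter_upwards [hf2.coeFn_toLp] with y hy
  rw [hy]
  exact hC y

theorem exists_isIntegralOperator {k : X → X → ℝ} (hk : StronglyMeasurable (Function.uncurry k))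
    {C : ℝ} (hC0 : 0 ≤ C) (hC : ∀ x y, ‖k x y‖ ≤ C) :
    ∃ T : Lp ℝ 2 ν →L[ℝ] Lp ℝ 2 ν, IsIntegralOperator ν k T := by
  have hkx (x : X) : AEStronglyMeasurable (k x) ν :=
    (hk.comp_measurable measurable_prodMk_left).aestronglyMeasurable
  have hk2 (x : X) : MemLp (k x) 2 ν := .of_bound (hkx x) C (.of_forall (hC x))
  have hmeas (F : Lp ℝ 2 ν) : StronglyMeasurable fun x ↦ ∫ y, k x y * F y ∂ν :=
    (hk.mul ((Lp.stronglyMeasurable F).comp_measurable measurable_snd)).integral_prod_right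
  have hbound (F : Lp ℝ 2 ν) (x : X) := norm_integral_mul_le (hkx x) hC0 (hC x) F
  have hmem (F : Lp ℝ 2 ν) : MemLp (fun x ↦ ∫ y, k x y * F y ∂ν) 2 ν :=
    .of_bound (hmeas F).aestronglyMeasurable _ (.of_forall (hbound F))
  let A : Lp ℝ 2 ν →ₗ[ℝ] Lp ℝ 2 ν :=
    { toFun F := (hmem F).toLp _
      map_add' F G := by
        rw [← MemLp.toLp_add]
        refine MemLp.toLp_congr _ _ (.of_forall fun x ↦ ?_)
        simp only [Pi.add_apply, integral_mul_eq_inner (hk2 x), inner_add_right]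
      map_smul' c F := by
        rw [RingHom.id_apply, ← MemLp.toLp_const_smul]
        refine MemLp.toLp_congr _ _ (.of_forall fun x ↦ ?_)
        simp only [Pi.smul_apply, integral_mul_eq_inner (hk2 x), inner_smul_right, smul_eq_mul] }
  have hA (F : Lp ℝ 2 ν) : A F =ᵐ[ν] fun x ↦ ∫ y, k x y * F y ∂ν := (hmem F).coeFn_toLp
  have hA_bound (F : Lp ℝ 2 ν) : ‖A F‖ ≤ ν.real Set.univ ^ (2 : ENNReal).toReal⁻¹ *
      (ν.real Set.univ ^ (2 : ENNReal).toReal⁻¹ * C) * ‖F‖ := by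
    rw [mul_assoc]
    refine Lp.norm_le_of_ae_bound (by positivity) ?_
    filter_upwards [hA F] with x hx
    rw [hx]
    exact hbound F x
  refine ⟨A.mkContinuous _ hA_bound, fun F ↦ ?_⟩
  filter_upwards [hA F] with x hx
  exact ⟨(hk2 x).integrable_mul (Lp.memLp F), hx⟩

end IntegralOperator

lemma norm_toLp_mulVec_sq_le {m n : Type*} [Fintype m] [Fintype n] {A : Matrix m n ℝ} {r c : ℝ}
    (hA : ∀ i j, 0 ≤ A i j) (hr : 0 ≤ r) (hrow : ∀ i, ∑ j, A i j ≤ r)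
    (hcol : ∀ j, ∑ i, A i j ≤ c) (v : EuclideanSpace ℝ n) :
    ‖WithLp.toLp 2 (A.mulVec v)‖ ^ 2 ≤ r * c * ‖v‖ ^ 2 := by
  -- Cauchy–Schwarz with respect to the weights `A i ·`.
  have hentry (i : m) : A.mulVec v i ^ 2 ≤ r * ∑ j, A i j * v j ^ 2 :=
    have hnonneg (j : n) : 0 ≤ A i j * v j ^ 2 := mul_nonneg (hA i j) (sq_nonneg _)
    calc A.mulVec v i ^ 2 = (∑ j, A i j * v j) ^ 2 := rfl
      _ ≤ (∑ j, A i j) * ∑ j, A i j * v j ^ 2 :=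
        Finset.sum_sq_le_sum_mul_sum_of_sq_le_mul _ (fun j _ ↦ hA i j) (fun j _ ↦ hnonneg j)
          fun j _ ↦ by rw [mul_pow, sq (A i j), mul_assoc]
      _ ≤ r * ∑ j, A i j * v j ^ 2 :=
        mul_le_mul_of_nonneg_right (hrow i) (Finset.sum_nonneg fun j _ ↦ hnonneg j)
  calc ‖WithLp.toLp 2 (A.mulVec v)‖ ^ 2 = ∑ i, A.mulVec v i ^ 2 :=
        EuclideanSpace.real_norm_sq_eq _
    _ ≤ ∑ i, r * ∑ j, A i j * v j ^ 2 := Finset.sum_le_sum fun i _ ↦ hentry i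
    _ = r * ∑ j, (∑ i, A i j) * v j ^ 2 := by
      rw [← Finset.mul_sum, Finset.sum_comm]
      simp only [Finset.sum_mul]
    _ ≤ r * ∑ j, c * v j ^ 2 := by
      gcongr with j
      exact hcol j
    _ = r * c * ‖v‖ ^ 2 := by
      rw [← Finset.mul_sum, ← EuclideanSpace.real_norm_sq_eq, mul_assoc]

/-- A finite family of maps `t i : Y → X` tiles `(X, ν)` by copies of `(Y, μ)`: the measure `ν` is
the sum of the images of `μ`, and the folding map `q : X → Y` is a common left inverse of the `t i`
up to null sets. -/
structure IsTiling {X Y ι : Type*} [MeasurableSpace X] [MeasurableSpace Y] [Fintype ι]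
    (ν : Measure X) (μ : Measure Y) (t : ι → Y → X) (q : X → Y) : Prop where
  measurable_tile : ∀ i, Measurable (t i)
  measurable_fold : Measurable q
  fold_tile : ∀ i, ∀ᵐ a ∂μ, q (t i a) = a
  sum_map_tile : ∑ i, μ.map (t i) = ν

/-- The values of `F` over the point `a`, one for each tile, as a vector of Euclidean space. -/
def fiberVec {X Y ι : Type*} (t : ι → Y → X) (F : X → ℝ) (a : Y) : EuclideanSpace ℝ ι :=
  WithLp.toLp 2 fun i ↦ F (t i a)

namespace IsTiling

variable {X Y ι : Type*} [MeasurableSpace X] [MeasurableSpace Y] [Fintype ι]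
  {ν : Measure X} {μ : Measure Y} {t : ι → Y → X} {q : X → Y}

lemma map_tile_le (h : IsTiling ν μ t q) (i : ι) : μ.map (t i) ≤ ν := by
  rw [← h.sum_map_tile, ← Measure.sum_fintype]
  exact Measure.le_sum (fun i ↦ μ.map (t i)) i

lemma ae_tile (h : IsTiling ν μ t q) {P : X → Prop} (hP : ∀ᵐ x ∂ν, P x) :
    ∀ᵐ a ∂μ, ∀ i, P (t i a) :=
  ae_all_iff.2 fun i ↦
    ae_of_ae_map (h.measurable_tile i).aemeasurable (ae_mono (h.map_tile_le i) hP)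

lemma memLp_comp_tile (h : IsTiling ν μ t q) {f : X → ℝ} {r : ENNReal} (hf : MemLp f r ν) (i : ι) :
    MemLp (fun a ↦ f (t i a)) r μ :=
  (hf.mono_measure (h.map_tile_le i)).comp_of_map (h.measurable_tile i).aemeasurable

lemma integrable_comp_tile (h : IsTiling ν μ t q) {f : X → ℝ} (hf : Integrable f ν) (i : ι) :
    Integrable (fun a ↦ f (t i a)) μ :=
  memLp_one_iff_integrable.1 (h.memLp_comp_tile (memLp_one_iff_integrable.2 hf) i)

lemma integral_eq_integral_sum (h : IsTiling ν μ t q) {f : X → ℝ} (hf : Integrable f ν) :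
    ∫ x, f x ∂ν = ∫ a, ∑ i, f (t i a) ∂μ := by
  have hf_tile (i : ι) : Integrable f (μ.map (t i)) := hf.mono_measure (h.map_tile_le i)
  calc ∫ x, f x ∂ν = ∑ i, ∫ x, f x ∂μ.map (t i) := by
        rw [← h.sum_map_tile, integral_finsetSum_measure fun i _ ↦ hf_tile i]
    _ = ∑ i, ∫ a, f (t i a) ∂μ := Finset.sum_congr rfl fun i _ ↦
        integral_map (h.measurable_tile i).aemeasurable (hf_tile i).aestronglyMeasurable
    _ = ∫ a, ∑ i, f (t i a) ∂μ :=
        (integral_finsetSum _ fun i _ ↦ h.integrable_comp_tile hf i).symm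

lemma norm_sq_eq_integral_fiberVec (h : IsTiling ν μ t q) (F : Lp ℝ 2 ν) :
    ‖F‖ ^ 2 = ∫ a, ‖fiberVec t F a‖ ^ 2 ∂μ := by
  rw [norm_sq_eq_integral_sq, h.integral_eq_integral_sum (Lp.memLp F).integrable_sq]
  simp only [fiberVec, EuclideanSpace.real_norm_sq_eq]

lemma memLp_norm_fiberVec (h : IsTiling ν μ t q) {F : X → ℝ} {r : ENNReal} (hF : MemLp F r ν) :
    MemLp (fun a ↦ ‖fiberVec t F a‖) r μ :=
  (MemLp.of_eval_piLp fun i ↦ h.memLp_comp_tile hF i).norm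

lemma map_fold (h : IsTiling ν μ t q) : ν.map q = (Fintype.card ι : ENNReal) • μ := by
  have hfold (i : ι) : (μ.map (t i)).map q = μ := by
    rw [Measure.map_map h.measurable_fold (h.measurable_tile i)]
    exact (Measure.map_congr (h.fold_tile i)).trans Measure.map_id
  rw [← h.sum_map_tile, Measure.map_finset_sum h.measurable_fold.aemeasurable]
  simp only [hfold, Finset.sum_const, Finset.card_univ, Nat.cast_smul_eq_nsmul]

lemma exists_forall_tile_eq (h : IsTiling ν μ t q) (G : Lp ℝ 2 μ) :
    ∃ F : Lp ℝ 2 ν, ∀ᵐ a ∂μ, ∀ i, F (t i a) = G a := by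
  have hG : MemLp G 2 (ν.map q) := by
    rw [h.map_fold]
    exact (Lp.memLp G).smul_measure (ENNReal.natCast_ne_top _)
  have hGq : MemLp (G ∘ q) 2 ν := hG.comp_of_map h.measurable_fold.aemeasurable
  refine ⟨hGq.toLp _, ?_⟩
  filter_upwards [h.ae_tile hGq.coeFn_toLp, ae_all_iff.2 h.fold_tile] with a hF hq i
  rw [hF i, Function.comp_apply, hq i]

lemma norm_sq_eq_card_mul (h : IsTiling ν μ t q) {F : Lp ℝ 2 ν} {G : Lp ℝ 2 μ}
    (hFG : ∀ᵐ a ∂μ, ∀ i, F (t i a) = G a) : ‖F‖ ^ 2 = Fintype.card ι * ‖G‖ ^ 2 := by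
  rw [h.norm_sq_eq_integral_fiberVec, norm_sq_eq_integral_sq, ← integral_const_mul]
  refine integral_congr_ae ?_
  filter_upwards [hFG] with a ha
  simp only [fiberVec, EuclideanSpace.real_norm_sq_eq, ha, Finset.sum_const, Finset.card_univ,
    nsmul_eq_mul]

variable {k : X → X → ℝ} {l : Y → Y → ℝ} {T : Lp ℝ 2 ν →L[ℝ] Lp ℝ 2 ν}
  {L : Lp ℝ 2 μ →L[ℝ] Lp ℝ 2 μ}

lemma ae_forall_tile_apply_eq (h : IsTiling ν μ t q) (hT : IsIntegralOperator ν k T)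
    (hL : IsIntegralOperator μ l L) (hrow : ∀ i b a, ∑ j, k (t i b) (t j a) = l b a)
    {F : Lp ℝ 2 ν} {G : Lp ℝ 2 μ} (hFG : ∀ᵐ a ∂μ, ∀ i, F (t i a) = G a) :
    ∀ᵐ b ∂μ, ∀ i, T F (t i b) = L G b := by
  filter_upwards [h.ae_tile (hT F), hL G] with b hTb hLb i
  rw [(hTb i).2, h.integral_eq_integral_sum (hTb i).1, hLb.2]
  refine integral_congr_ae ?_
  filter_upwards [hFG] with a ha
  simp only [ha, ← Finset.sum_mul, hrow]

theorem opNorm_ge [Nonempty ι] (h : IsTiling ν μ t q) (hT : IsIntegralOperator ν k T)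
    (hL : IsIntegralOperator μ l L) (hrow : ∀ i b a, ∑ j, k (t i b) (t j a) = l b a) :
    ‖L‖ ≤ ‖T‖ := by
  refine L.opNorm_le_bound (norm_nonneg _) fun G ↦ ?_
  obtain ⟨F, hFG⟩ := h.exists_forall_tile_eq G
  have hcard : (0 : ℝ) < Fintype.card ι := by exact_mod_cast Fintype.card_pos
  refine le_of_sq_le_sq (le_of_mul_le_mul_left ?_ hcard) (by positivity)
  calc Fintype.card ι * ‖L G‖ ^ 2 = ‖T F‖ ^ 2 :=
        (h.norm_sq_eq_card_mul (h.ae_forall_tile_apply_eq hT hL hrow hFG)).symm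
    _ ≤ (‖T‖ * ‖F‖) ^ 2 := by gcongr; exact T.le_opNorm F
    _ = Fintype.card ι * (‖T‖ * ‖G‖) ^ 2 := by
      rw [mul_pow, h.norm_sq_eq_card_mul hFG]
      ring

lemma ae_norm_fiberVec_apply_le [Nonempty ι] (h : IsTiling ν μ t q)
    (hT : IsIntegralOperator ν k T) (hL : IsIntegralOperator μ l L) (hk : ∀ x y, 0 ≤ k x y)
    (hrow : ∀ i b a, ∑ j, k (t i b) (t j a) ≤ l b a)
    (hcol : ∀ j b a, ∑ i, k (t i b) (t j a) ≤ l b a)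
    {F : Lp ℝ 2 ν} {G : Lp ℝ 2 μ} (hFG : ∀ᵐ a ∂μ, ‖fiberVec t F a‖ = G a) :
    ∀ᵐ b ∂μ, ‖fiberVec t (T F) b‖ ≤ L G b := by
  have hl (b a : Y) : 0 ≤ l b a :=
    (Finset.sum_nonneg fun _ _ ↦ hk _ _).trans (hrow (Classical.arbitrary ι) b a)
  filter_upwards [h.ae_tile (hT F), hL G] with b hTb hLb
  let A (a : Y) : Matrix ι ι ℝ := .of fun i j ↦ k (t i b) (t j a)
  let V (a : Y) : EuclideanSpace ℝ ι := WithLp.toLp 2 ((A a).mulVec (fiberVec t F a))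
  have hV (i : ι) : Integrable (fun a ↦ V a i) μ :=
    integrable_finsetSum _ fun j _ ↦ h.integrable_comp_tile (hTb i).1 j
  have hTF : fiberVec t (T F) b = ∫ a, V a ∂μ := by
    ext i
    rw [eval_integral_piLp hV]
    exact (hTb i).2.trans (h.integral_eq_integral_sum (hTb i).1)
  have hV_le : ∀ᵐ a ∂μ, ‖V a‖ ≤ l b a * G a := by
    filter_upwards [hFG] with a ha
    refine le_of_sq_le_sq ?_ (by rw [← ha]; exact mul_nonneg (hl b a) (norm_nonneg _))
    rw [← ha, mul_pow, sq (l b a)]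
    exact norm_toLp_mulVec_sq_le (fun _ _ ↦ hk _ _) (hl b a) (hrow · b a) (hcol · b a) _
  rw [hTF, hLb.2]
  exact norm_integral_le_of_norm_le hLb.1 hV_le

theorem opNorm_le [Nonempty ι] (h : IsTiling ν μ t q) (hT : IsIntegralOperator ν k T)
    (hL : IsIntegralOperator μ l L) (hk : ∀ x y, 0 ≤ k x y)
    (hrow : ∀ i b a, ∑ j, k (t i b) (t j a) ≤ l b a)
    (hcol : ∀ j b a, ∑ i, k (t i b) (t j a) ≤ l b a) : ‖T‖ ≤ ‖L‖ := by
  refine T.opNorm_le_bound (norm_nonneg _) fun F ↦ ?_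
  obtain ⟨G, hG⟩ : ∃ G : Lp ℝ 2 μ, ∀ᵐ a ∂μ, G a = ‖fiberVec t F a‖ :=
    ⟨_, (h.memLp_norm_fiberVec (Lp.memLp F)).coeFn_toLp⟩
  have hnorm : ‖F‖ = ‖G‖ := by
    rw [← sq_eq_sq₀ (norm_nonneg _) (norm_nonneg _), h.norm_sq_eq_integral_fiberVec,
      norm_sq_eq_integral_sq]
    refine integral_congr_ae ?_
    filter_upwards [hG] with a ha
    rw [ha]
  have hsq : ‖T F‖ ^ 2 ≤ ‖L G‖ ^ 2 := by
    rw [h.norm_sq_eq_integral_fiberVec, norm_sq_eq_integral_sq]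
    refine integral_mono_ae (h.memLp_norm_fiberVec (Lp.memLp _)).integrable_sq
      (Lp.memLp _).integrable_sq ?_
    filter_upwards [h.ae_norm_fiberVec_apply_le hT hL hk hrow hcol (hG.mono fun _ ↦ Eq.symm)]
      with b hb
    gcongr
  calc ‖T F‖ ≤ ‖L G‖ := le_of_sq_le_sq hsq (norm_nonneg _)
    _ ≤ ‖L‖ * ‖F‖ := hnorm ▸ L.le_opNorm G

theorem opNorm_eq [Nonempty ι] (h : IsTiling ν μ t q) (hT : IsIntegralOperator ν k T)
    (hL : IsIntegralOperator μ l L) (hk : ∀ x y, 0 ≤ k x y)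
    (hrow : ∀ i b a, ∑ j, k (t i b) (t j a) = l b a)
    (hcol : ∀ j b a, ∑ i, k (t i b) (t j a) = l b a) : ‖T‖ = ‖L‖ :=
  (h.opNorm_le hT hL hk (fun i b a ↦ (hrow i b a).le) fun j b a ↦ (hcol j b a).le).antisymm
    (h.opNorm_ge hT hL hrow)

end IsTiling

section Equivariant

variable {ι X R : Type*} [Fintype ι] [AddCommGroup ι] [AddCommGroup X] [AddCommMonoid R]
  {s : ι →+ X} {k : X → X → R}

lemma sum_equivariant_right (hk : ∀ i x y, k (x + s i) (y + s i) = k x y) (i : ι) (x y : X) :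
    ∑ j, k (x + s i) (y + s j) = ∑ j, k x (y + s j) := by
  rw [← Equiv.sum_comp (Equiv.addRight i)]
  simp only [Equiv.coe_addRight, map_add, ← add_assoc, hk]

lemma sum_equivariant_left (hk : ∀ i x y, k (x + s i) (y + s i) = k x y) (j : ι) (x y : X) :
    ∑ i, k (x + s i) (y + s j) = ∑ i, k x (y + s i) := by
  rw [← Equiv.sum_comp (Equiv.subLeft j)]
  refine Finset.sum_congr rfl fun i _ ↦ ?_
  rw [← hk (j - i) x (y + s i), add_assoc y, ← map_add, add_sub_cancel, Equiv.subLeft_apply]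

end Equivariant

lemma sum_zmod_eq_sum_range {R : Type*} [AddCommMonoid R] (M : ℕ) [NeZero M] (f : ZMod M → R) :
    ∑ n, f n = ∑ n ∈ Finset.range M, f n := by
  obtain ⟨M, rfl⟩ := Nat.exists_eq_succ_of_ne_zero (NeZero.ne M)
  rw [Finset.sum_range]
  exact Finset.sum_congr rfl fun n _ ↦ congrArg f (Fin.cast_val_eq_self n).symm

lemma restrict_Ioc_eq_sum_map {p : ℝ} (hp : 0 ≤ p) (M : ℕ) :
    (volume : Measure ℝ).restrict (Set.Ioc 0 (M * p)) =
      ∑ n ∈ Finset.range M, (volume.restrict (Set.Ioo 0 p)).map (· + n * p) := by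
  have hmono : Monotone fun n : ℕ ↦ n * p := fun m n hmn ↦ by dsimp only; gcongr
  have htranslate (n : ℕ) : (volume.restrict (Set.Ioo 0 p)).map (· + n * p) =
      volume.restrict (Set.Ioc (n * p) ((n + 1 : ℕ) * p)) := by
    rw [← ((measurePreserving_add_right volume (n * p)).restrict_preimage measurableSet_Ioc).map_eq,
      Set.preimage_add_const_Ioc, sub_self, Nat.cast_succ, add_one_mul, add_sub_cancel_left,
      Measure.restrict_congr_set Ioo_ae_eq_Ioc]
  have hdisjoint : ((Finset.range M : Finset ℕ) : Set ℕ).Pairwise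
      (Function.onFun Disjoint fun n : ℕ ↦ Set.Ioc (n * p) ((n + 1 : ℕ) * p)) :=
    hmono.pairwise_disjoint_on_Ioc_succ.set_pairwise _
  have hunion : ⋃ n ∈ Finset.range M, Set.Ioc (n * p) ((n + 1 : ℕ) * p) = Set.Ioc 0 (M * p) := by
    simpa using hmono.biUnion_Ico_Ioc_map_succ 0 M
  rw [← hunion, Measure.restrict_biUnion_finset hdisjoint fun _ ↦ measurableSet_Ioc,
    Measure.sum_fintype, Finset.sum_coe_sort (Finset.range M) fun n : ℕ ↦
      volume.restrict (Set.Ioc (n * p) ((n + 1 : ℕ) * p))]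
  simp only [htranslate]

section AddCircle

variable {T p : ℝ} {M : ℕ}

/-- The homomorphism from `ℤ/M` to the circle of circumference `T = M * p` sending `1` to `p`. -/
noncomputable def stepHom (hT : T = M * p) : ZMod M →+ AddCircle T :=
  ZMod.lift M ⟨zmultiplesHom (AddCircle T) (p : AddCircle T), by
    rw [zmultiplesHom_apply, natCast_zsmul, ← AddCircle.coe_nsmul, nsmul_eq_mul, ← hT,
      AddCircle.coe_period]⟩

lemma stepHom_natCast (hT : T = M * p) (n : ℕ) : stepHom hT n = ((n * p : ℝ) : AddCircle T) := by
  rw [← Int.cast_natCast (R := ZMod M), stepHom, ZMod.lift_coe]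
  simp only [zmultiplesHom_apply, natCast_zsmul, ← AddCircle.coe_nsmul, nsmul_eq_mul]

lemma apply_add_stepHom {R : Type*} {K : AddCircle T × AddCircle T → R} [NeZero M]
    (hT : T = M * p)
    (hK : ∀ x y : AddCircle T, K (x + (p : AddCircle T), y + (p : AddCircle T)) = K (x, y))
    (n : ZMod M) (x y : AddCircle T) : K (x + stepHom hT n, y + stepHom hT n) = K (x, y) := by
  obtain ⟨n, rfl⟩ := ZMod.natCast_zmod_surjective n
  rw [stepHom_natCast]
  induction n with
  | zero => simp only [Nat.cast_zero, zero_mul, AddCircle.coe_zero, add_zero]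
  | succ n ih =>
    rw [Nat.cast_succ, add_one_mul, AddCircle.coe_add, ← add_assoc, ← add_assoc, hK, ih]

lemma fract_div_mul_periodic (hT : T = M * p) :
    Function.Periodic (fun a : ℝ ↦ Int.fract (a / p) * p) T := fun a ↦ by
  have hfract := ((Int.fract_periodic ℝ).nat_mul M).div_const p a
  rw [mul_one, ← hT] at hfract
  exact congrArg (· * p) hfract

/-- The representative in `[0, p)` modulo `p` of a point of the circle of circumference
`T = M * p`. -/
noncomputable def foldIco (hT : T = M * p) : AddCircle T → ℝ :=
  (fract_div_mul_periodic hT).lift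

lemma measurable_foldIco (hT : T = M * p) : Measurable (foldIco hT) :=
  QuotientAddGroup.measurable_from_quotient.2 (by
    change Measurable fun a : ℝ ↦ Int.fract (a / p) * p
    fun_prop)

lemma foldIco_coe_add_stepHom [NeZero M] (hT : T = M * p) {a : ℝ} (ha : a ∈ Set.Ioo 0 p)
    (n : ZMod M) : foldIco hT ((a : AddCircle T) + stepHom hT n) = a := by
  have hp : 0 < p := ha.1.trans ha.2
  have hfract : Int.fract (a / p) = a / p :=
    Int.fract_eq_self.2 ⟨div_nonneg ha.1.le hp.le, (div_lt_one hp).2 ha.2⟩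
  obtain ⟨n, rfl⟩ := ZMod.natCast_zmod_surjective n
  rw [stepHom_natCast, ← AddCircle.coe_add]
  change Int.fract ((a + n * p) / p) * p = a
  rw [add_div, mul_div_cancel_right₀ _ hp.ne', Int.fract_add_natCast, hfract,
    div_mul_cancel₀ _ hp.ne']

/-- The kernel on `(0, p)` obtained from a kernel `K` on the circle by summing over `M` translates
by multiples of `p` in the second variable; this is the kernel of `L₀`. -/
noncomputable def foldedKernel (K : AddCircle T × AddCircle T → ℝ) (M : ℕ) (p β α : ℝ) : ℝ :=
  ∑ n ∈ Finset.range M, K ((β : AddCircle T), ((α + n * p : ℝ) : AddCircle T))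

lemma measurable_foldedKernel {K : AddCircle T × AddCircle T → ℝ} (hK : Measurable K) (M : ℕ)
    (p : ℝ) : Measurable (Function.uncurry (foldedKernel K M p)) := by
  unfold Function.uncurry foldedKernel
  exact Finset.measurable_sum _ fun _ _ ↦ hK.comp <|
    (AddCircle.measurable_mk'.comp measurable_fst).prodMk
      (AddCircle.measurable_mk'.comp (measurable_snd.add_const _))

lemma norm_foldedKernel_le {K : AddCircle T × AddCircle T → ℝ} {C : ℝ} (hC : ∀ x, ‖K x‖ ≤ C)
    (M : ℕ) (p β α : ℝ) : ‖foldedKernel K M p β α‖ ≤ M * C := by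
  refine (norm_sum_le_of_le _ fun n _ ↦ hC _).trans_eq ?_
  rw [Finset.sum_const, Finset.card_range, nsmul_eq_mul]

lemma sum_stepHom_eq_foldedKernel [NeZero M] (hT : T = M * p) (K : AddCircle T × AddCircle T → ℝ)
    (β α : ℝ) :
    ∑ n : ZMod M, K ((β : AddCircle T), (α : AddCircle T) + stepHom hT n) =
      foldedKernel K M p β α := by
  simp only [foldedKernel, sum_zmod_eq_sum_range, stepHom_natCast, AddCircle.coe_add]

variable [Fact (0 < T)]

lemma sum_map_coe_add_stepHom [NeZero M] (hT : T = M * p) (hp : 0 ≤ p) :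
    ∑ n : ZMod M, (volume.restrict (Set.Ioo 0 p)).map
      (fun a : ℝ ↦ (a : AddCircle T) + stepHom hT n) = volume := by
  have htile (n : ℕ) : (fun a : ℝ ↦ (a : AddCircle T) + stepHom hT n) =
      (fun a : ℝ ↦ (a : AddCircle T)) ∘ (· + n * p) := by
    ext a
    rw [stepHom_natCast, Function.comp_apply, AddCircle.coe_add]
  have hIoc : volume.restrict (Set.Ioc 0 (0 + T)) =
      ∑ n ∈ Finset.range M, (volume.restrict (Set.Ioo 0 p)).map (· + n * p) := by
    rw [zero_add, hT, restrict_Ioc_eq_sum_map hp]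
  rw [sum_zmod_eq_sum_range, ← (AddCircle.measurePreserving_mk T 0).map_eq, hIoc,
    Measure.map_finset_sum AddCircle.measurable_mk'.aemeasurable]
  refine Finset.sum_congr rfl fun n _ ↦ ?_
  rw [htile, Measure.map_map AddCircle.measurable_mk' (measurable_add_const _)]

lemma isTiling_addCircle [NeZero M] (hT : T = M * p) (hp : 0 ≤ p) :
    IsTiling (volume : Measure (AddCircle T)) (volume.restrict (Set.Ioo 0 p))
      (fun (n : ZMod M) (a : ℝ) ↦ (a : AddCircle T) + stepHom hT n) (foldIco hT) where
  measurable_tile _ := AddCircle.measurable_mk'.add_const _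
  measurable_fold := measurable_foldIco hT
  fold_tile n := by
    filter_upwards [ae_restrict_mem measurableSet_Ioo] with a ha
    exact foldIco_coe_add_stepHom hT ha n
  sum_map_tile := sum_map_coe_add_stepHom hT hp

theorem kernel_operator_norm_eq_general (hT : T = M * p)
    {K : AddCircle T × AddCircle T → ℝ} (hKm : Measurable K) (hKb : BddAbove (Set.range K))
    (hK0 : ∀ x, 0 ≤ K x)
    (hKper : ∀ β α : AddCircle T, K (β + (p : AddCircle T), α + (p : AddCircle T)) = K (β, α)) :
    ∃ (S : Lp ℝ 2 (volume : Measure (AddCircle T)) →L[ℝ] Lp ℝ 2 (volume : Measure (AddCircle T)))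
      (L₀ : Lp ℝ 2 (volume.restrict (Set.Ioo 0 p)) →L[ℝ] Lp ℝ 2 (volume.restrict (Set.Ioo 0 p))),
      IsIntegralOperator volume (fun β α ↦ K (β, α)) S ∧
      IsIntegralOperator (volume.restrict (Set.Ioo 0 p)) (foldedKernel K M p) L₀ ∧
      ‖S‖ = ‖L₀‖ := by
  have hMp : 0 < M * p := hT ▸ Fact.out
  have hp : 0 ≤ p := (pos_of_mul_pos_right hMp M.cast_nonneg).le
  have : NeZero M := ⟨fun hM ↦ by simp [hM] at hMp⟩
  obtain ⟨C, hC⟩ := hKb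
  have hKC (x : AddCircle T × AddCircle T) : ‖K x‖ ≤ C :=
    (Real.norm_of_nonneg (hK0 x)).trans_le (hC ⟨x, rfl⟩)
  have hC0 : 0 ≤ C := (norm_nonneg _).trans (hKC 0)
  have hequiv := apply_add_stepHom hT hKper
  obtain ⟨S, hS⟩ := exists_isIntegralOperator (ν := volume) (k := fun β α ↦ K (β, α))
    hKm.stronglyMeasurable hC0 fun β α ↦ hKC (β, α)
  obtain ⟨L₀, hL₀⟩ := exists_isIntegralOperator (ν := volume.restrict (Set.Ioo 0 p))
    (measurable_foldedKernel hKm M p).stronglyMeasurable (mul_nonneg M.cast_nonneg hC0)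
    (norm_foldedKernel_le hKC M p)
  refine ⟨S, L₀, hS, hL₀, (isTiling_addCircle hT hp).opNorm_eq hS hL₀ (fun _ _ ↦ hK0 _) ?_ ?_⟩
  · intro m β α
    rw [← sum_stepHom_eq_foldedKernel hT K]
    exact sum_equivariant_right (k := fun β α ↦ K (β, α)) hequiv m β α
  · intro n β α
    rw [← sum_stepHom_eq_foldedKernel hT K]
    exact sum_equivariant_left (k := fun β α ↦ K (β, α)) hequiv n β α

end AddCircle

/-- For a continuous nonnegative kernel `K` on `𝕋_N × 𝕋_N` with `K(β+π, α+π) = K(β,α)`,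
the integral operator `T` on `L²(𝕋_N)` with kernel `K` and the integral operator `L₀`
on `L²(0,π)` with kernel `L₀(β,α) = Σ_{n<2N} K(β, α + nπ)` are bounded and have equal
operator norms. -/
theorem kernel_operator_norm_eq (N : ℕ) (hN : 0 < N)
    [Fact ((0 : ℝ) < 2 * Real.pi * N)]
    (K : AddCircle (2 * Real.pi * (N : ℝ)) × AddCircle (2 * Real.pi * (N : ℝ)) → ℝ)
    (hKc : Continuous K) (hK0 : ∀ p, 0 ≤ K p)
    (hKper : ∀ β α : AddCircle (2 * Real.pi * (N : ℝ)),
      K (β + ((Real.pi : ℝ) : AddCircle (2 * Real.pi * (N : ℝ))),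
         α + ((Real.pi : ℝ) : AddCircle (2 * Real.pi * (N : ℝ)))) = K (β, α)) :
    ∃ (T : Lp ℝ 2 (volume : Measure (AddCircle (2 * Real.pi * (N : ℝ)))) →L[ℝ]
           Lp ℝ 2 (volume : Measure (AddCircle (2 * Real.pi * (N : ℝ)))))
      (L₀ : Lp ℝ 2 (volume.restrict (Set.Ioo (0 : ℝ) Real.pi)) →L[ℝ]
            Lp ℝ 2 (volume.restrict (Set.Ioo (0 : ℝ) Real.pi))),
      (∀ F : Lp ℝ 2 (volume : Measure (AddCircle (2 * Real.pi * (N : ℝ)))),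
        ∀ᵐ β ∂(volume : Measure (AddCircle (2 * Real.pi * (N : ℝ)))),
          (T F : AddCircle (2 * Real.pi * (N : ℝ)) → ℝ) β
            = ∫ α, K (β, α) * F α
                ∂(volume : Measure (AddCircle (2 * Real.pi * (N : ℝ))))) ∧
      (∀ G : Lp ℝ 2 (volume.restrict (Set.Ioo (0 : ℝ) Real.pi)),
        ∀ᵐ β ∂(volume.restrict (Set.Ioo (0 : ℝ) Real.pi)),
          (L₀ G : ℝ → ℝ) β
            = ∫ α in Set.Ioo (0 : ℝ) Real.pi,
                (∑ n ∈ Finset.range (2 * N),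
                  K (((β : ℝ) : AddCircle (2 * Real.pi * (N : ℝ))),
                     ((α + n * Real.pi : ℝ) : AddCircle (2 * Real.pi * (N : ℝ)))))
                  * G α) ∧
      ‖T‖ = ‖L₀‖ := by
  obtain ⟨T, L₀, hT, hL₀, hnorm⟩ := kernel_operator_norm_eq_general (M := 2 * N) (p := Real.pi)
    (by push_cast; ring) hKc.measurable (isCompact_range hKc).bddAbove hK0 hKper
  exact ⟨T, L₀, fun F ↦ (hT F).mono fun _ h ↦ h.2, fun G ↦ (hL₀ G).mono fun _ h ↦ h.2, hnorm⟩
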